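/- Let q be an odd prime power, let H ⊆ F_q be a subfield, and let V ⊆ F_q be an additive subgroup with H ⊆ V. Set E := H×V ⊆ F_q². Then Δ_P(E) = V; in particular |Δ_P(E)| = |V|. -/

import Mathlib

section ParabolicDistance

variable {R : Type*} [Ring R]

/-- The parabolic distance `‖x - y‖_P` on the plane over a ring; not symmetric in `x` and `y`. -/
def parabolicDist (x y : R × R) : R :=
  (x.2 - y.2) + (x.1 - y.1) ^ 2

/-- The parabolic distance set `Δ_P(E)`. The pairs are ordered and may be equal. -/
def parabolicDistSet (E : Set (R × R)) : Set R :=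
  {t | ∃ x ∈ E, ∃ y ∈ E, parabolicDist x y = t}

theorem parabolicDist_mk_same_left (a b c : R) : parabolicDist (a, b) (a, c) = b - c := by
  simp [parabolicDist]

theorem subset_parabolicDistSet_prod {A B : Set R} (hA : A.Nonempty) (hB : 0 ∈ B) :
    B ⊆ parabolicDistSet (A ×ˢ B) := by
  obtain ⟨a, ha⟩ := hA
  intro b hb
  exact ⟨(a, b), ⟨ha, hb⟩, (a, 0), ⟨ha, hB⟩, by rw [parabolicDist_mk_same_left, sub_zero]⟩

theorem parabolicDistSet_prod_subset {A : Set R} {V : AddSubgroup R}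
    (hAV : ∀ a ∈ A, ∀ b ∈ A, (a - b) ^ 2 ∈ V) :
    parabolicDistSet (A ×ˢ (V : Set R)) ⊆ V := by
  rintro _ ⟨x, ⟨hx₁, hx₂⟩, y, ⟨hy₁, hy₂⟩, rfl⟩
  exact V.add_mem (V.sub_mem hx₂ hy₂) (hAV x.1 hx₁ y.1 hy₁)

theorem subfield_subgroup_construction_general {A : Set R} (hA : A.Nonempty) {V : AddSubgroup R}
    (hAV : ∀ a ∈ A, ∀ b ∈ A, (a - b) ^ 2 ∈ V) :
    parabolicDistSet (A ×ˢ (V : Set R)) = V :=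
  (parabolicDistSet_prod_subset hAV).antisymm (subset_parabolicDistSet_prod hA V.zero_mem)

end ParabolicDistance

theorem subfield_subgroup_construction
    {F : Type*} [Field F] [Fintype F]
    (hq : Odd (Fintype.card F))
    (H : Subfield F) (V : AddSubgroup F) (hHV : (H : Set F) ⊆ (V : Set F)) :
    {t : F | ∃ x ∈ (H : Set F) ×ˢ (V : Set F), ∃ y ∈ (H : Set F) ×ˢ (V : Set F),
        (x.2 - y.2) + (x.1 - y.1) ^ 2 = t} = (V : Set F) ∧
    Nat.card {t : F | ∃ x ∈ (H : Set F) ×ˢ (V : Set F), ∃ y ∈ (H : Set F) ×ˢ (V : Set F),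
        (x.2 - y.2) + (x.1 - y.1) ^ 2 = t} = Nat.card V := by
  have distSet_eq : parabolicDistSet ((H : Set F) ×ˢ (V : Set F)) = V :=
    subfield_subgroup_construction_general ⟨0, H.zero_mem⟩
      fun _ ha _ hb ↦ hHV (H.pow_mem (H.sub_mem ha hb) 2)
  exact ⟨distSet_eq, congrArg (fun S : Set F ↦ Nat.card S) distSet_eq⟩
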